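/- arXiv:1509.06722 — 5 statements merged into one kernel-verified Lean document; each statement's English description precedes it below -/
import Mathlib

section
/- Let (α, μ) be a measure space, let m ≥ 1 be a natural number, and set p = 2m. Then the function N₀ : Lp(μ; ℝ) → ℝ defined by N₀(f) = ∫ (f(x))^{2m} dμ(x) (which equals ∫ |f(x)|^p dμ(x), since the exponent is even) is infinitely Fréchet differentiable, i.e. of class C^∞ as a map between the Banach space Lp(μ; ℝ) and ℝ. -/
open MeasureTheory ENNReal

theorem exists_pow_contDiff {α : Type*} [MeasurableSpace α] (μ : Measure α)
    (p : ℝ≥0∞) [Fact (1 ≤ p)] (k : ℕ) : ∀ (r : ℝ≥0∞) [Fact (1 ≤ r)],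
    r⁻¹ = k * p⁻¹ → ∃ g : Lp ℝ p μ → Lp ℝ r μ, ContDiff ℝ (⊤ : ℕ∞) g ∧
      ∀ f, g f =ᵐ[μ] fun x => (f x) ^ k := by
  induction k with
  | zero =>
    intro r _ hr
    have hr' : r = ∞ := by simpa using hr
    subst hr'
    refine ⟨fun _ => (memLp_top_const (1 : ℝ)).toLp _, contDiff_const, fun f => ?_⟩
    simpa using MemLp.coeFn_toLp (memLp_top_const (μ := μ) (1 : ℝ))
  | succ k ih =>
    intro r hr1 hr
    have hr1' : r⁻¹ ≤ 1 := ENNReal.inv_le_one.2 hr1.out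
    have hsum : r⁻¹ = p⁻¹ + k * p⁻¹ := by
      rw [hr]; push_cast; ring
    have hq : Fact (1 ≤ ((k : ℝ≥0∞) * p⁻¹)⁻¹) := ⟨by
      rw [ENNReal.one_le_inv]
      exact le_trans (by rw [hsum]; exact le_add_self) hr1'⟩
    obtain ⟨g, hg, hgf⟩ := ih ((k : ℝ≥0∞) * p⁻¹)⁻¹ (inv_inv _)
    have : HolderTriple p ((k : ℝ≥0∞) * p⁻¹)⁻¹ r := ⟨by rw [inv_inv, hsum]⟩
    refine ⟨fun f => (ContinuousLinearMap.mul ℝ ℝ).holderL μ p ((k : ℝ≥0∞) * p⁻¹)⁻¹ r f (g f),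
      ?_, fun f => ?_⟩
    · exact (ContinuousLinearMap.contDiff _).clm_apply hg
    · beta_reduce
      rw [ContinuousLinearMap.holderL_apply_apply]
      filter_upwards [hgf f, (ContinuousLinearMap.mul ℝ ℝ).coeFn_holder (r := r) f (g f)]
        with x h1 h2
      rw [h2, h1, pow_succ', ContinuousLinearMap.mul_apply']

/-- For `p = 2m` a positive even integer, the functional
`N₀(f) = ∫ (f x)^(2m) dμ = ∫ |f|^p dμ` is `C^∞` on `Lᵖ(μ; ℝ)`. -/
theorem stmt_1 {α : Type*} [MeasurableSpace α] (μ : Measure α)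
    (m : ℕ) (hm : 1 ≤ m) [Fact (1 ≤ (2 * m : ℝ≥0∞))] :
    ContDiff ℝ (⊤ : ℕ∞) (fun f : Lp ℝ (2 * m : ℝ≥0∞) μ => ∫ x, (f x) ^ (2 * m) ∂μ) := by
  obtain ⟨g, hg, hgf⟩ := exists_pow_contDiff μ (2 * m : ℝ≥0∞) (2 * m) 1 (by
    rw [inv_one]; push_cast
    refine (ENNReal.mul_inv_cancel ?_ ?_).symm
    · have : m ≠ 0 := by omega
      simpa using this
    · finiteness)
  have : (fun f : Lp ℝ (2 * m : ℝ≥0∞) μ => ∫ x, (f x) ^ (2 * m) ∂μ) =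
      fun f => (L1.integralCLM : (α →₁[μ] ℝ) →L[ℝ] ℝ) (g f) := by
    funext f
    rw [← L1.integral_eq, L1.integral_eq_integral]
    exact (integral_congr_ae (hgf f)).symm
  rw [this]
  exact (ContinuousLinearMap.contDiff _).comp hg
end

section
/- Let (α, μ) be a measure space, let m ≥ 1 be a natural number, and set p = 2m. Then the map f ↦ ‖f‖_{L^p}^p from Lp(μ; ℝ) to ℝ, sending f to the p-th power of its L^p norm, is infinitely Fréchet differentiable (of class C^∞). -/
open MeasureTheory ENNReal

section aux
variable {α : Type*} [MeasurableSpace α] {μ : Measure α}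

lemma aux_integrable {N : ℕ} (hN : N ≠ 0) {p : ℝ≥0∞} (hp : p = N)
    (f : Fin N → Lp ℝ p μ) : Integrable (fun a => ∏ i, f i a) μ := by
  rw [← memLp_one_iff_integrable]
  have h := MemLp.prod' (μ := μ) (s := Finset.univ) (f := fun i => (f i : α → ℝ))
    (p := fun _ => p) (fun i _ => Lp.memLp (f i))
  convert h using 1
  subst hp
  simp only [Finset.sum_const, Finset.card_univ, Fintype.card_fin, nsmul_eq_mul]
  rw [ENNReal.mul_inv_cancel (by exact_mod_cast hN) (by simp), inv_one]

lemma aux_bound {N : ℕ} (hN : N ≠ 0) {p : ℝ≥0∞} (hp : p = N)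
    (f : Fin N → Lp ℝ p μ) : ‖∫ a, ∏ i, f i a ∂μ‖ ≤ 1 * ∏ i, ‖f i‖ := by
  have hN' : (N : ℝ) ≠ 0 := by exact_mod_cast hN
  have hp0 : p ≠ 0 := by subst hp; exact_mod_cast hN
  have hpt : p ≠ ⊤ := by subst hp; simp
  have key : ‖∫ a, ∏ i, f i a ∂μ‖ₑ ≤ ∏ i, eLpNorm (f i) p μ := by
    refine (enorm_integral_le_lintegral_enorm _).trans ?_
    have h := ENNReal.lintegral_prod_norm_pow_le (μ := μ) (Finset.univ : Finset (Fin N))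
      (f := fun i a => ‖f i a‖ₑ ^ (N : ℝ)) (p := fun _ => (N : ℝ)⁻¹)
      (fun i _ => ((Lp.aestronglyMeasurable (f i)).enorm.pow_const _))
      (by simp [hN']) (fun _ _ => by positivity)
    have e1 : ∀ a, ‖∏ i, f i a‖ₑ = ∏ i, (‖f i a‖ₑ ^ (N : ℝ)) ^ ((N : ℝ)⁻¹) := by
      intro a
      simp_rw [← ENNReal.rpow_mul, mul_inv_cancel₀ hN', ENNReal.rpow_one]
      simp only [enorm_eq_nnnorm, nnnorm_prod]
      push_cast
      rfl
    simp_rw [e1]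
    refine h.trans (le_of_eq ?_)
    refine Finset.prod_congr rfl fun i _ => ?_
    rw [eLpNorm_eq_lintegral_rpow_enorm_toReal hp0 hpt]
    subst hp
    simp
  have h2 := ENNReal.toReal_mono (ENNReal.prod_ne_top fun i _ => Lp.eLpNorm_ne_top (f i)) key
  rw [ENNReal.toReal_prod, toReal_enorm] at h2
  simpa [Lp.norm_def] using h2

lemma aux_update {N : ℕ} [DecidableEq (Fin N)] {p : ℝ≥0∞} (f : Fin N → Lp ℝ p μ) (i : Fin N)
    (x : Lp ℝ p μ) (a : α) :
    ∏ j, (Function.update f i x j) a = x a * ∏ j ∈ Finset.univ.erase i, f j a := by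
  rw [← Finset.mul_prod_erase _ _ (Finset.mem_univ i), Function.update_self]
  congr 1
  refine Finset.prod_congr rfl fun j hj => ?_
  rw [Function.update_of_ne (Finset.ne_of_mem_erase hj)]

noncomputable def auxMulti {N : ℕ} (hN : N ≠ 0) {p : ℝ≥0∞} (hp : p = N) [Fact (1 ≤ p)] :
    MultilinearMap ℝ (fun _ : Fin N => Lp ℝ p μ) ℝ where
  toFun f := ∫ a, ∏ i, f i a ∂μ
  map_update_add' f i x y := by
    rw [← integral_add (aux_integrable hN hp _) (aux_integrable hN hp _)]
    refine integral_congr_ae ?_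
    filter_upwards [Lp.coeFn_add x y] with a ha
    rw [aux_update, aux_update, aux_update, ha, Pi.add_apply, add_mul]
  map_update_smul' f i c x := by
    rw [← integral_smul]
    refine integral_congr_ae ?_
    filter_upwards [Lp.coeFn_smul c x] with a ha
    rw [aux_update, aux_update, ha, Pi.smul_apply, smul_mul_assoc]

lemma aux_norm {m : ℕ} (hm : 1 ≤ m) {p : ℝ≥0∞} (hp : p = (2 * m : ℕ)) (f : Lp ℝ p μ) :
    ‖f‖ ^ (2 * m) = ∫ a, ∏ _i : Fin (2 * m), f a ∂μ := by
  have hN : 2 * m ≠ 0 := by omega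
  have hp0 : p ≠ 0 := by subst hp; exact_mod_cast hN
  have hpt : p ≠ ⊤ := by subst hp; exact ENNReal.natCast_ne_top _
  have hpr : p.toReal = (2 * m : ℕ) := by subst hp; exact ENNReal.toReal_natCast _
  have hnn : 0 ≤ ∫ a, ‖f a‖ ^ p.toReal ∂μ := integral_nonneg fun a => by positivity
  rw [Lp.norm_def, (Lp.memLp f).eLpNorm_eq_integral_rpow_norm hp0 hpt,
    ENNReal.toReal_ofReal (by positivity), hpr, Real.rpow_inv_natCast_pow (hpr ▸ hnn) hN]
  refine integral_congr_ae (.of_forall fun a => ?_)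
  simp only [Real.rpow_natCast, Finset.prod_const, Finset.card_univ, Fintype.card_fin,
    Real.norm_eq_abs]
  exact (even_two_mul m).pow_abs _

end aux

/-- For `p = 2m` a positive even integer, the map `f ↦ ‖f‖_{Lᵖ}^p`
is `C^∞` on `Lᵖ(μ; ℝ)`. -/
theorem stmt_2 {α : Type*} [MeasurableSpace α] (μ : Measure α)
    (m : ℕ) (hm : 1 ≤ m) [Fact (1 ≤ (2 * m : ℝ≥0∞))] :
    ContDiff ℝ (⊤ : ℕ∞) (fun f : Lp ℝ (2 * m : ℝ≥0∞) μ => ‖f‖ ^ (2 * m)) := by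
  have hN : 2 * m ≠ 0 := by omega
  have hp : (2 * m : ℝ≥0∞) = (2 * m : ℕ) := by push_cast; rfl
  have h := ((auxMulti (μ := μ) hN hp).mkContinuous 1 (aux_bound hN hp)).contDiff
    (n := ((⊤ : ℕ∞) : WithTop ℕ∞))
  have h2 : ContDiff ℝ ((⊤ : ℕ∞) : WithTop ℕ∞)
      (fun (f : Lp ℝ (2 * m : ℝ≥0∞) μ) (_ : Fin (2 * m)) => f) :=
    contDiff_pi.2 fun _ => contDiff_id
  have h3 := h.comp h2
  convert h3 using 1
  funext f
  exact aux_norm hm hp f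
end

section
/- Let (α, μ) be a measure space, let m ≥ 1 be a natural number, set p = 2m, and let E be a real inner product space. Then the function Lp(μ; E) → ℝ defined by f ↦ ∫ ‖f(x)‖^{2m} dμ(x) (equivalently f ↦ ∫ (⟨f(x), f(x)⟩)^m dμ(x)) is infinitely Fréchet differentiable (of class C^∞) on the Banach space Lp(μ; E). -/
open MeasureTheory ENNReal

theorem stmt_5_aux {α : Type*} [MeasurableSpace α] (μ : Measure α)
    (m : ℕ) (hm : 1 ≤ m) [Fact (1 ≤ (2 * m : ℝ≥0∞))]
    {E : Type*} [NormedAddCommGroup E] [InnerProductSpace ℝ E] (k : ℕ) :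
    ∀ (r : ℝ≥0∞) [Fact (1 ≤ r)], k + 1 ≤ m → r⁻¹ = ((k + 1 : ℕ) : ℝ≥0∞) * (m : ℝ≥0∞)⁻¹ →
    ∃ F : Lp E (2 * m : ℝ≥0∞) μ → Lp ℝ r μ, ContDiff ℝ (⊤ : ℕ∞) F ∧
      ∀ f, F f =ᵐ[μ] fun x => ‖f x‖ ^ (2 * (k + 1)) := by
  induction k with
  | zero =>
    intro r _ _ hr
    have : HolderTriple (2 * m : ℝ≥0∞) (2 * m : ℝ≥0∞) r := ⟨by
      rw [hr, ENNReal.mul_inv (by simp) (by simp), ← add_mul, ENNReal.inv_two_add_inv_two]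
      simp⟩
    refine ⟨fun f => (innerSL ℝ (E := E)).holderL μ (2 * m : ℝ≥0∞) (2 * m : ℝ≥0∞) r f f, ?_, ?_⟩
    · exact (ContinuousLinearMap.contDiff _).clm_apply contDiff_id
    · intro f
      filter_upwards [(innerSL ℝ (E := E)).coeFn_holder (r := r) f f] with x hx
      refine hx.trans ?_
      exact (real_inner_self_eq_norm_sq (f x)).trans (by simp)
  | succ k ih =>
    intro r _ hk hr
    have hm0 : (m : ℝ≥0∞) ≠ 0 := by simp; omega
    have h1 : Fact (1 ≤ (m : ℝ≥0∞)) := ⟨by exact_mod_cast hm⟩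
    let q : ℝ≥0∞ := (((k + 1 : ℕ) : ℝ≥0∞) * (m : ℝ≥0∞)⁻¹)⁻¹
    have h2 : Fact (1 ≤ q) := ⟨by
      refine ENNReal.one_le_inv.2 ?_
      rw [← div_eq_mul_inv]
      refine ENNReal.div_le_of_le_mul ?_
      rw [one_mul]
      exact_mod_cast (by omega : k + 1 ≤ m)⟩
    obtain ⟨F, hF, hF'⟩ := ih q (by omega) (inv_inv _)
    -- the base case again
    have hb : HolderTriple (2 * m : ℝ≥0∞) (2 * m : ℝ≥0∞) m := ⟨by
      rw [ENNReal.mul_inv (by simp) (by simp), ← add_mul, ENNReal.inv_two_add_inv_two]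
      simp⟩
    have ht : HolderTriple q (m : ℝ≥0∞) r := ⟨by
      rw [hr, inv_inv]; push_cast; ring⟩
    let G : Lp E (2 * m : ℝ≥0∞) μ → Lp ℝ m μ := fun f =>
      (innerSL ℝ (E := E)).holderL μ (2 * m : ℝ≥0∞) (2 * m : ℝ≥0∞) m f f
    have hG : ContDiff ℝ (⊤ : ℕ∞) G := (ContinuousLinearMap.contDiff _).clm_apply contDiff_id
    refine ⟨fun f => (ContinuousLinearMap.mul ℝ ℝ).holderL μ q m r (F f) (G f), ?_, ?_⟩
    · exact ((ContinuousLinearMap.contDiff _).comp hF).clm_apply hG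
    · intro f
      filter_upwards [(innerSL ℝ (E := E)).coeFn_holder (r := (m : ℝ≥0∞)) f f, hF' f,
        (ContinuousLinearMap.mul ℝ ℝ).coeFn_holder (r := r) (F f) (G f)] with x hx hx2 hx3
      refine hx3.trans ?_
      have hx' : G f x = ‖f x‖ ^ 2 := hx.trans (real_inner_self_eq_norm_sq (f x))
      rw [hx2, hx']
      simp only [ContinuousLinearMap.mul_apply']
      ring

/-- For `p = 2m` a positive even integer and `E` a real inner product space,
the functional `f ↦ ∫ ‖f x‖^(2m) dμ` is `C^∞` on `Lᵖ(μ; E)`. -/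
theorem stmt_5 {α : Type*} [MeasurableSpace α] (μ : Measure α)
    (m : ℕ) (hm : 1 ≤ m) [Fact (1 ≤ (2 * m : ℝ≥0∞))]
    {E : Type*} [NormedAddCommGroup E] [InnerProductSpace ℝ E] :
    ContDiff ℝ (⊤ : ℕ∞) (fun f : Lp E (2 * m : ℝ≥0∞) μ => ∫ x, ‖f x‖ ^ (2 * m) ∂μ) := by
  have hm0 : (m : ℝ≥0∞) ≠ 0 := by simp; omega
  have hk : m - 1 + 1 = m := by omega
  obtain ⟨F, hF, hF'⟩ := stmt_5_aux μ m hm (E := E) (m - 1) 1 (by omega) (by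
    rw [hk, ENNReal.mul_inv_cancel hm0 (by simp), inv_one])
  have key : (fun f : Lp E (2 * m : ℝ≥0∞) μ => ∫ x, ‖f x‖ ^ (2 * m) ∂μ)
      = fun f => L1.integralCLM' (μ := μ) (E := ℝ) ℝ (F f) := by
    funext f
    have h := integral_congr_ae (hF' f)
    rw [hk] at h
    rw [← h, ← L1.integral_eq_integral, L1.integral_eq]
    rfl
  rw [key]
  exact (ContinuousLinearMap.contDiff _).comp hF
end

section
/- Let K be a nonempty compact topological space, let E and F be finite-dimensional real normed vector spaces, and let g : E → F be a C^∞ map. Then the composition operator g∗ : C(K, E) → C(K, F) defined by g∗(u) = g ∘ u is infinitely Fréchet differentiable (of class C^∞) between the Banach spaces C(K, E) and C(K, F) equipped with the supremum norm. -/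
open Set Filter Topology

universe uK uE uF

/-- Pointwise application as a bounded bilinear map. -/
noncomputable def pointwiseApp (K : Type uK) [TopologicalSpace K] [CompactSpace K]
    (E : Type uE) (F : Type uF) [NormedAddCommGroup E] [NormedSpace ℝ E]
    [NormedAddCommGroup F] [NormedSpace ℝ F] :
    C(K, E →L[ℝ] F) →L[ℝ] C(K, E) →L[ℝ] C(K, F) :=
  LinearMap.mkContinuous₂
    (LinearMap.mk₂ ℝ
      (fun (A : C(K, E →L[ℝ] F)) (h : C(K, E)) =>
        (⟨fun x => A x (h x), A.continuous.clm_apply h.continuous⟩ : C(K, F)))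
      (by intros; ext; simp) (by intros; ext; simp) (by intros; ext; simp) (by intros; ext; simp))
    1 (by
      intro A h
      rw [ContinuousMap.norm_le _ (by positivity)]
      intro x
      rw [one_mul]
      exact ((A x).le_opNorm (h x)).trans
        (mul_le_mul (A.norm_coe_le_norm x) (h.norm_coe_le_norm x) (norm_nonneg _) (norm_nonneg A)))

theorem pointwiseApp_apply {K : Type uK} [TopologicalSpace K] [CompactSpace K]
    {E : Type uE} {F : Type uF} [NormedAddCommGroup E] [NormedSpace ℝ E]
    [NormedAddCommGroup F] [NormedSpace ℝ F] (A : C(K, E →L[ℝ] F)) (h : C(K, E)) (x : K) :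
    pointwiseApp K E F A h x = A x (h x) := rfl

theorem hasFDerivAt_postcomp {K : Type uK} [TopologicalSpace K] [CompactSpace K]
    {E : Type uE} {F : Type uF} [NormedAddCommGroup E] [NormedSpace ℝ E]
    [NormedAddCommGroup F] [NormedSpace ℝ F] (g : C(E, F)) (g' : C(E, E →L[ℝ] F))
    (hg : ∀ x, HasFDerivAt g (g' x) x) (u : C(K, E)) :
    HasFDerivAt (fun u : C(K, E) => g.comp u) (pointwiseApp K E F (g'.comp u)) u := by
  rw [hasFDerivAt_iff_isLittleO, Asymptotics.isLittleO_iff]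
  intro ε hε
  have hc : Continuous (fun u : C(K, E) => g'.comp u) := ContinuousMap.continuous_postcomp g'
  obtain ⟨δ, hδ, H⟩ := (Metric.continuous_iff (α := C(K, E)) (β := C(K, E →L[ℝ] F))).1 hc u ε hε
  filter_upwards [Metric.ball_mem_nhds u hδ] with v hv
  rw [ContinuousMap.norm_le _ (by positivity)]
  intro x
  have hx : ‖v x - u x‖ ≤ ‖v - u‖ := (v - u).norm_coe_le_norm x
  have hvu : ‖v - u‖ < δ := by simpa [dist_eq_norm] using hv
  have key : ∀ y ∈ Metric.ball (u x) δ, ‖g' y - g' (u x)‖ ≤ ε := by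
    intro y hy
    have h1 : dist (u + ContinuousMap.const K (y - u x)) u < δ := by
      rw [dist_eq_norm, add_sub_cancel_left]
      rw [ContinuousMap.norm_lt_iff _ hδ]
      intro z
      simpa [dist_eq_norm] using hy
    have h2 := H _ h1
    have h3 := (ContinuousMap.dist_apply_le_dist (f := g'.comp (u + ContinuousMap.const K (y - u x)))
      (g := g'.comp u) x).trans h2.le
    rw [dist_eq_norm] at h3
    simpa using h3
  have := (convex_ball (u x) δ).norm_image_sub_le_of_norm_hasFDerivWithin_le'
    (fun y _ => (hg y).hasFDerivWithinAt) key (Metric.mem_ball_self hδ)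
    (y := v x) (by rw [Metric.mem_ball, dist_eq_norm]; exact hx.trans_lt hvu)
  exact this.trans (mul_le_mul_of_nonneg_left hx hε.le)

theorem contDiff_postcomp_aux {K : Type uK} [TopologicalSpace K] [CompactSpace K]
    {E : Type uE} [NormedAddCommGroup E] [NormedSpace ℝ E] (n : ℕ) :
    ∀ (F : Type (max uE uF)) [NormedAddCommGroup F] [NormedSpace ℝ F] (g : C(E, F)),
      ContDiff ℝ n g → ContDiff ℝ n (fun u : C(K, E) => g.comp u) := by
  induction n with
  | zero =>
    intro F _ _ g _
    exact contDiff_zero.2 (ContinuousMap.continuous_postcomp g)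
  | succ n ih =>
    intro F _ _ g hg
    have hg1 : ContDiff ℝ ((n : WithTop ℕ∞) + 1) g := by exact_mod_cast hg
    have hd : ContDiff ℝ n (fderiv ℝ g) := (contDiff_succ_iff_fderiv.1 hg1).2.2
    let g' : C(E, E →L[ℝ] F) := ⟨fderiv ℝ g, hd.continuous⟩
    have hD := fun u : C(K, E) => hasFDerivAt_postcomp g g'
      (fun x => ((contDiff_succ_iff_fderiv.1 hg1).1 x).hasFDerivAt) u
    have : ContDiff ℝ ((n : WithTop ℕ∞) + 1) (fun u : C(K, E) => g.comp u) := by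
      rw [contDiff_succ_iff_fderiv]
      refine ⟨fun u => (hD u).differentiableAt, by simp, ?_⟩
      rw [show fderiv ℝ (fun u : C(K, E) => g.comp u)
        = fun u => pointwiseApp K E F (g'.comp u) from funext fun u => (hD u).fderiv]
      exact (pointwiseApp K E F).contDiff.comp (ih (E →L[ℝ] F) g' hd)
    exact_mod_cast this

/-- For a nonempty compact space `K`, finite-dimensional real normed spaces `E`, `F`
and a `C^∞` map `g : E → F`, the composition operator
`g∗ : C(K, E) → C(K, F)`, `u ↦ g ∘ u`, is `C^∞` between the sup-norm Banach spaces. -/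
theorem stmt_6 {K : Type*} [TopologicalSpace K] [CompactSpace K] [Nonempty K]
    {E F : Type*} [NormedAddCommGroup E] [NormedSpace ℝ E] [FiniteDimensional ℝ E]
    [NormedAddCommGroup F] [NormedSpace ℝ F] [FiniteDimensional ℝ F]
    (g : E → F) (hg : ContDiff ℝ (⊤ : ℕ∞) g) :
    ContDiff ℝ (⊤ : ℕ∞)
      (fun u : C(K, E) => (⟨g, hg.continuous⟩ : C(E, F)).comp u) := by
  rw [contDiff_infty]
  intro n
  let e : ULift.{max u_2 u_3} F ≃L[ℝ] F := ContinuousLinearEquiv.ulift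
  have hn : ContDiff ℝ n (fun x => e.symm (g x)) :=
    e.symm.contDiff.comp (contDiff_infty.1 hg n)
  have h := contDiff_postcomp_aux (K := K) n (ULift.{max u_2 u_3} F) ⟨_, hn.continuous⟩ hn
  exact ((e : ULift.{max u_2 u_3} F →L[ℝ] F).compLeftContinuous ℝ K).contDiff.comp h
end

section
/- Let K be a nonempty compact topological space, let E and F be finite-dimensional real normed vector spaces, let g : E → F be a C^∞ map, and let g∗ : C(K, E) → C(K, F) be the composition operator g∗(u) = g ∘ u. Then for every u₀ ∈ C(K, E), the map g∗ is Fréchet differentiable at u₀, and its derivative is the continuous linear map C(K, E) → C(K, F) sending v to the continuous function x ↦ (Dg)(u₀(x))(v(x)), where (Dg)(e) denotes the Fréchet derivative of g at e ∈ E. -/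
/-- For a nonempty compact space `K`, finite-dimensional real normed spaces `E`, `F`,
a `C^∞` map `g : E → F` and `u₀ ∈ C(K, E)`, the composition operator
`g∗(u) = g ∘ u` is Fréchet differentiable at `u₀` with derivative the continuous
linear map `v ↦ (x ↦ (Dg)(u₀ x)(v x))`. -/
theorem stmt_7 {K : Type*} [TopologicalSpace K] [CompactSpace K] [Nonempty K]
    {E F : Type*} [NormedAddCommGroup E] [NormedSpace ℝ E] [FiniteDimensional ℝ E]
    [NormedAddCommGroup F] [NormedSpace ℝ F] [FiniteDimensional ℝ F]
    (g : E → F) (hg : ContDiff ℝ (⊤ : ℕ∞) g) (u₀ : C(K, E)) :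
    ∃ L : C(K, E) →L[ℝ] C(K, F),
      (∀ v : C(K, E), ∀ x : K, L v x = fderiv ℝ g (u₀ x) (v x)) ∧
      HasFDerivAt (fun u : C(K, E) => (⟨g, hg.continuous⟩ : C(E, F)).comp u) L u₀ := by
  have hd : Differentiable ℝ g := hg.differentiable (by simp)
  have hc : Continuous (fderiv ℝ g) := hg.continuous_fderiv (by simp)
  have hcu : Continuous (fun x => fderiv ℝ g (u₀ x)) := hc.comp u₀.continuous
  let A : C(K, E →L[ℝ] F) := ⟨fun x => fderiv ℝ g (u₀ x), hcu⟩
  let L₀ : C(K, E) →ₗ[ℝ] C(K, F) :=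
    { toFun := fun v => ⟨fun x => A x (v x), A.continuous.clm_apply v.continuous⟩
      map_add' := fun v w => by ext x; simp
      map_smul' := fun c v => by ext x; simp }
  let L : C(K, E) →L[ℝ] C(K, F) := L₀.mkContinuous ‖A‖ (fun v => by
    rw [ContinuousMap.norm_le _ (by positivity)]
    intro x
    exact (A x).le_of_opNorm_le_of_le (A.norm_coe_le_norm x) (v.norm_coe_le_norm x))
  have hL : ∀ v : C(K, E), ∀ x : K, L v x = fderiv ℝ g (u₀ x) (v x) := fun v x => rfl
  refine ⟨L, hL, ?_⟩
  rw [hasFDerivAt_iff_isLittleO, Asymptotics.isLittleO_iff]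
  intro ε hε
  have hK : IsCompact (Set.range u₀) := isCompact_range u₀.continuous
  have hU := hK.uniformContinuousAt_of_continuousAt (fderiv ℝ g)
    (fun a _ => hc.continuousAt) (Metric.dist_mem_uniformity hε)
  obtain ⟨δ, hδ, hU⟩ := Metric.mem_uniformity_dist.1 hU
  filter_upwards [Metric.ball_mem_nhds u₀ hδ] with u hu
  rw [ContinuousMap.norm_le _ (by positivity)]
  intro x
  have hx : u x ∈ Metric.ball (u₀ x) δ := lt_of_le_of_lt (ContinuousMap.dist_apply_le_dist x) hu
  have key := (convex_ball (u₀ x) δ).norm_image_sub_le_of_norm_fderiv_le'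
    (𝕜 := ℝ) (f := g) (φ := fderiv ℝ g (u₀ x)) (C := ε)
    (fun y _ => hd y) (fun y hy => by
      have h1 : dist (u₀ x) y < δ := by rw [dist_comm]; exact hy
      have h2 : dist (fderiv ℝ g (u₀ x)) (fderiv ℝ g y) < ε := hU h1 ⟨x, rfl⟩
      rw [dist_comm, dist_eq_norm] at h2
      exact h2.le) (Metric.mem_ball_self hδ) hx
  refine le_trans ?_ (key.trans (mul_le_mul_of_nonneg_left ((u - u₀).norm_coe_le_norm x) hε.le))
  simp [hL]
end
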